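/- Let r > 0 and Δ_1, …, Δ_M ∈ ℝ. Consider the feasible set K = {w ∈ ℝ^M : 0 ≤ w_i ≤ 2/M for all i, Σ_{i=1}^M w_i = 1} and the objective G(w) = Σ_{i=1}^M (1/M − w_i)·Δ_i + r·Σ_{i=1}^M w_i·log(M·w_i) (with the convention 0·log 0 = 0). Then there exists a constant C > 0 such that the vector w* defined by w*_i = min{C·exp(Δ_i/r), 2/M} belongs to K (in particular Σ_i w*_i = 1) and minimizes G over K. -/

import Mathlib

open scoped BigOperators

/-!
Put `a i = p i * exp (Δ i / r)`. Up to an additive constant the objective is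
`r * ∑ i, w i * log (w i / a i)`, so the task is to project `a` onto a capped simplex in relative
entropy. Choose `C` by the intermediate value theorem so that `v i = min (C * a i) (b i)` has the
prescribed total mass. For a competitor `w`, convexity gives
`w i * log (w i / a i) ≥ w i * log (v i / a i) + (w i - v i)`. Moreover `log (v i / a i) ≤ log C`,
and the inequality is strict only at coordinates where `v i = b i ≥ w i`; hence
`(w i - v i) * log (v i / a i) ≥ (w i - v i) * log C`. The terms linear in `w i - v i` vanish after
summation because `v` and `w` have the same mass, which shows that `v` is optimal.
-/

open Real

theorem sub_le_mul_log_div {v w : ℝ} (hv : 0 < v) (hw : 0 ≤ w) : w - v ≤ w * log (w / v) := by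
  calc w - v = v * (w / v - 1) := by field_simp
    _ ≤ v * (w / v * log (w / v)) := by
      gcongr
      exact self_sub_one_le_mul_log (div_nonneg hw hv.le)
    _ = w * log (w / v) := by field_simp

theorem mul_log_div_add_sub_le {a v w : ℝ} (ha : 0 < a) (hv : 0 < v) (hw : 0 ≤ w) :
    w * log (v / a) + (w - v) ≤ w * log (w / a) := by
  rcases hw.eq_or_lt with rfl | hw'
  · simpa using hv.le
  · have hsplit : log (w / a) = log (v / a) + log (w / v) := by
      rw [log_div hw'.ne' ha.ne', log_div hv.ne' ha.ne', log_div hw'.ne' hv.ne']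
      ring
    rw [hsplit, mul_add]
    gcongr
    exact sub_le_mul_log_div hv hw

theorem sub_min_mul_log_le {a b C w : ℝ} (ha : 0 < a) (hb : 0 < b) (hwb : w ≤ b) :
    (w - min (C * a) b) * log C ≤ (w - min (C * a) b) * log (min (C * a) b / a) := by
  rcases le_total (C * a) b with hCa | hCa
  · rw [min_eq_left hCa, mul_div_cancel_right₀ C ha.ne']
  · rw [min_eq_right hCa]
    have hlog : log (b / a) ≤ log C := log_le_log (div_pos hb ha) ((div_le_iff₀ ha).2 hCa)
    exact mul_le_mul_of_nonpos_left hlog (sub_nonpos.2 hwb)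

theorem mul_log_min_div_add_le {a b C w : ℝ} (ha : 0 < a) (hC : 0 < C)
    (hw : 0 ≤ w) (hwb : w ≤ b) :
    min (C * a) b * log (min (C * a) b / a) + (w - min (C * a) b) * (log C + 1) ≤
      w * log (w / a) := by
  rcases (hw.trans hwb).eq_or_lt with rfl | hb
  · simp [le_antisymm hwb hw, (mul_pos hC ha).le]
  · have hv : 0 < min (C * a) b := lt_min (mul_pos hC ha) hb
    linarith [mul_log_div_add_sub_le ha hv hw, sub_min_mul_log_le (C := C) ha hb hwb]

theorem mul_log_div_mul_exp {p : ℝ} (hp : p ≠ 0) (w x : ℝ) :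
    w * log (w / (p * exp x)) = w * log (w / p) - w * x := by
  rcases eq_or_ne w 0 with rfl | hw
  · simp
  · rw [← div_div, log_div (div_ne_zero hw hp) (exp_ne_zero x), log_exp, mul_sub]

theorem exists_forall_le_mul {ι : Type*} [Finite ι] {a : ι → ℝ} (ha : ∀ i, 0 < a i)
    (b : ι → ℝ) : ∃ C, 0 ≤ C ∧ ∀ i, b i ≤ C * a i := by
  obtain ⟨B, hB⟩ := (Set.finite_range fun i => b i / a i).bddAbove
  refine ⟨max B 0, le_max_right B 0, fun i => (div_le_iff₀ (ha i)).1 ?_⟩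
  exact (hB (Set.mem_range_self i)).trans (le_max_left B 0)

section CappedScaling

variable {ι : Type*} [Fintype ι]

/-- The simplex `{w ≥ 0 : ∑ i, w i = t}` of total mass `t`, truncated by the upper bounds `b`. -/
def cappedSimplex (b : ι → ℝ) (t : ℝ) : Set (ι → ℝ) :=
  {w | (∀ i, 0 ≤ w i ∧ w i ≤ b i) ∧ ∑ i, w i = t}

/-- The relative entropy (Kullback-Leibler divergence) of the weights `w` with respect to `a`;
neither vector is assumed to be normalized. -/
noncomputable def relEntropy (w a : ι → ℝ) : ℝ :=
  ∑ i, w i * log (w i / a i)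

/-- The excess term `∑ i, (p i - w i) * Δ i` of the weights `w` against the reference weights `p`,
regularized at temperature `r` by the relative entropy with respect to `p`. -/
noncomputable def regularizedExcess (r : ℝ) (Δ p w : ι → ℝ) : ℝ :=
  ∑ i, (p i - w i) * Δ i + r * relEntropy w p

theorem relEntropy_min_le {a b w : ι → ℝ} {C t : ℝ} (ha : ∀ i, 0 < a i) (hC : 0 < C)
    (hmass : ∑ i, min (C * a i) (b i) = t) (hw : w ∈ cappedSimplex b t) :
    relEntropy (fun i => min (C * a i) (b i)) a ≤ relEntropy w a := by
  have hlinear : ∑ i, (w i - min (C * a i) (b i)) * (log C + 1) = 0 := by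
    rw [← Finset.sum_mul, Finset.sum_sub_distrib, hw.2, hmass, sub_self, zero_mul]
  calc relEntropy (fun i => min (C * a i) (b i)) a
      = ∑ i, (min (C * a i) (b i) * log (min (C * a i) (b i) / a i) +
          (w i - min (C * a i) (b i)) * (log C + 1)) := by
        rw [Finset.sum_add_distrib, hlinear, add_zero, relEntropy]
    _ ≤ relEntropy w a := Finset.sum_le_sum fun i _ =>
        mul_log_min_div_add_le (ha i) hC (hw.1 i).1 (hw.1 i).2

theorem exists_sum_min_mul_eq {a b : ι → ℝ} {t : ℝ} (ha : ∀ i, 0 < a i) (hb : ∀ i, 0 ≤ b i)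
    (ht : 0 < t) (htb : t ≤ ∑ i, b i) : ∃ C, 0 < C ∧ ∑ i, min (C * a i) (b i) = t := by
  let mass : ℝ → ℝ := fun C => ∑ i, min (C * a i) (b i)
  have hcont : Continuous mass := by fun_prop
  have hzero : mass 0 = 0 := by simp [mass, hb]
  obtain ⟨B, hB, hBa⟩ := exists_forall_le_mul ha b
  have hfull : mass B = ∑ i, b i := by simp [mass, hBa]
  obtain ⟨C, hC, hmass⟩ : t ∈ mass '' Set.Icc 0 B :=
    intermediate_value_Icc hB hcont.continuousOn ⟨hzero.trans_le ht.le, htb.trans_eq hfull.symm⟩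
  have hC0 : C ≠ 0 := by
    rintro rfl
    exact ht.ne (hzero.symm.trans hmass)
  exact ⟨C, hC.1.lt_of_ne' hC0, hmass⟩

theorem min_mul_mem_cappedSimplex {a b : ι → ℝ} {C t : ℝ} (ha : ∀ i, 0 ≤ a i)
    (hb : ∀ i, 0 ≤ b i) (hC : 0 ≤ C) (hmass : ∑ i, min (C * a i) (b i) = t) :
    (fun i => min (C * a i) (b i)) ∈ cappedSimplex b t :=
  ⟨fun i => ⟨le_min (mul_nonneg hC (ha i)) (hb i), min_le_right _ _⟩, hmass⟩

theorem regularizedExcess_eq_add_relEntropy {r : ℝ} (hr : r ≠ 0) (Δ : ι → ℝ) {p : ι → ℝ}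
    (hp : ∀ i, p i ≠ 0) (w : ι → ℝ) :
    regularizedExcess r Δ p w =
      ∑ i, p i * Δ i + r * relEntropy w (fun i => p i * exp (Δ i / r)) := by
  simp only [regularizedExcess, relEntropy, mul_log_div_mul_exp (hp _), Finset.mul_sum,
    ← Finset.sum_add_distrib]
  refine Finset.sum_congr rfl fun i _ => ?_
  field_simp
  ring

end CappedScaling

theorem stmt_4_general {ι : Type*} [Fintype ι] {r t : ℝ} (hr : 0 < r) (Δ : ι → ℝ) {p b : ι → ℝ}
    (hp : ∀ i, 0 < p i) (hb : ∀ i, 0 ≤ b i) (ht : 0 < t) (htb : t ≤ ∑ i, b i) :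
    ∃ C : ℝ, 0 < C ∧
      (fun i => min (C * (p i * exp (Δ i / r))) (b i)) ∈ cappedSimplex b t ∧
      ∀ w ∈ cappedSimplex b t,
        regularizedExcess r Δ p (fun i => min (C * (p i * exp (Δ i / r))) (b i)) ≤
          regularizedExcess r Δ p w := by
  have ha : ∀ i, 0 < p i * exp (Δ i / r) := fun i => mul_pos (hp i) (exp_pos _)
  obtain ⟨C, hC, hmass⟩ := exists_sum_min_mul_eq ha hb ht htb
  refine ⟨C, hC, min_mul_mem_cappedSimplex (fun i => (ha i).le) hb hC.le hmass, fun w hw => ?_⟩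
  simp only [regularizedExcess_eq_add_relEntropy hr.ne' Δ fun i => (hp i).ne']
  gcongr
  exact relEntropy_min_le ha hC hmass hw

/-- The capped-softmax weights minimize the KL-regularized reweighting excess term
over the capped probability simplex. -/
theorem stmt_4 {M : ℕ} (hM : 0 < M) (r : ℝ) (hr : 0 < r) (Δ : Fin M → ℝ)
    (K : Set (Fin M → ℝ))
    (hK : K = {w : Fin M → ℝ |
      (∀ i, 0 ≤ w i ∧ w i ≤ 2 / (M : ℝ)) ∧ ∑ i, w i = 1})
    (G : (Fin M → ℝ) → ℝ)
    (hG : G = fun w : Fin M → ℝ =>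
      (∑ i, ((1 / (M : ℝ)) - w i) * Δ i)
        + r * ∑ i, w i * Real.log ((M : ℝ) * w i)) :
    ∃ C : ℝ, 0 < C ∧
      (fun i => min (C * Real.exp (Δ i / r)) (2 / (M : ℝ))) ∈ K ∧
      ∀ w ∈ K, G (fun i => min (C * Real.exp (Δ i / r)) (2 / (M : ℝ))) ≤ G w := by
  have hM' : (0 : ℝ) < M := Nat.cast_pos.2 hM
  have hcap : (1 : ℝ) ≤ ∑ _i : Fin M, 2 / (M : ℝ) := by
    simp [mul_div_cancel₀ (2 : ℝ) hM'.ne']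
  have hG' : G = regularizedExcess r Δ fun _ => 1 / (M : ℝ) := by
    simp only [hG, funext_iff, regularizedExcess, relEntropy, div_div_eq_mul_div, div_one,
      mul_comm (M : ℝ), implies_true]
  obtain ⟨C, hC, hmem, hmin⟩ := stmt_4_general hr Δ (fun _ => one_div_pos.2 hM')
    (fun _ => div_nonneg zero_le_two hM'.le) one_pos hcap
  simp only [← mul_assoc] at hmem hmin
  subst hK hG'
  exact ⟨C * (1 / M), mul_pos hC (one_div_pos.2 hM'), hmem, hmin⟩
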